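/- Let F be a commutative ring, A a commutative F-algebra and n a natural number. Then there exists a commutative F-algebra V together with an F-algebra homomorphism π : A → Mat_n(V) such that for every commutative F-algebra B the map from AlgHom_F(V, B) to AlgHom_F(A, Mat_n(B)) sending ρ to the composite of π with the entrywise application of ρ to matrices is a bijection. -/

import Mathlib

universe u

namespace SymmetricProduct

/-- A universal `n`-dimensional representation of the commutative `F`-algebra `A`:
a commutative `F`-algebra `V` together with an `F`-algebra homomorphism
`π : A → Mat_n(V)` such that for every commutative `F`-algebra `B`, the map
`AlgHom_F(V, B) → AlgHom_F(A, Mat_n(B))`, `ρ ↦ (entrywise ρ) ∘ π`, is a bijection. -/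
structure UniversalRep (F : Type u) (A : Type u) [CommRing F] [CommRing A] [Algebra F A]
    (n : ℕ) where
  V : Type u
  [commRing : CommRing V]
  [algebra : Algebra F V]
  π : A →ₐ[F] Matrix (Fin n) (Fin n) V
  universal : ∀ (B : Type u) [CommRing B] [Algebra F B],
    Function.Bijective (fun ρ : V →ₐ[F] B => (AlgHom.mapMatrix ρ).comp π)

/-! Adjoin to `F` indeterminates for the entries of one matrix per element of `A`, and divide by
the polynomial identities saying that these matrices depend on the element as a homomorphism of
`F`-algebras. A homomorphism out of the quotient is then a choice of entries satisfying these
identities, which is a representation of `A`. Imposing the identities as a congruence rather than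
as an ideal makes the construction work over semirings. -/

universe v w x

open MvPolynomial

section EntryRel

variable {R m n : Type*} {r : Matrix m n R → Matrix m n R → Prop}

/-- The relation on scalars generated entrywise by a relation `r` on matrices. Dividing by it is
the universal way of identifying `r`-related matrices. -/
inductive EntryRel (r : Matrix m n R → Matrix m n R → Prop) : R → R → Prop
  | entry {M N : Matrix m n R} (h : r M N) (i : m) (j : n) : EntryRel r (M i j) (N i j)

lemma forall_entryRel_eq_iff {S : Type*} {f : R → S} :
    (∀ ⦃p q⦄, EntryRel r p q → f p = f q) ↔ ∀ ⦃M N⦄, r M N → M.map f = N.map f where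
  mp hf _ _ h := Matrix.ext fun i j => hf (.entry h i j)
  mpr hf := by
    rintro _ _ ⟨h, i, j⟩
    exact congrFun₂ (hf h) i j

end EntryRel

section RepresentationRing

variable (F : Type*) (A : Type*) (ι : Type*) [CommSemiring F]

/-- The matrix of indeterminates attached to `a : A`, the candidate for the image of `a` under a
generic representation. -/
noncomputable def genericMatrix (a : A) : Matrix ι ι (MvPolynomial (A × ι × ι) F) :=
  Matrix.of fun i j => X (a, i, j)

variable [Semiring A] [Algebra F A] [Fintype ι] [DecidableEq ι]

/-- The matrix identities expressing that `genericMatrix F A ι` is a homomorphism of `F`-algebras;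
preservation of `0` and `1` is contained in `scalar`. -/
inductive RepresentationRel :
    Matrix ι ι (MvPolynomial (A × ι × ι) F) → Matrix ι ι (MvPolynomial (A × ι × ι) F) → Prop
  | mul (a b : A) : RepresentationRel (genericMatrix F A ι (a * b))
      (genericMatrix F A ι a * genericMatrix F A ι b)
  | add (a b : A) : RepresentationRel (genericMatrix F A ι (a + b))
      (genericMatrix F A ι a + genericMatrix F A ι b)
  | scalar (c : F) : RepresentationRel (genericMatrix F A ι (algebraMap F A c))
      (algebraMap F _ c)

/-- The coordinate ring of the scheme of `ι`-dimensional representations of `A`. -/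
abbrev RepresentationRing : Type _ :=
  RingQuot (EntryRel (RepresentationRel F A ι))

/-- The universal representation, sending `a` to the class of its generic matrix. -/
noncomputable def universalRepresentation : A →ₐ[F] Matrix ι ι (RepresentationRing F A ι) :=
  let q := (RingQuot.mkAlgHom F (EntryRel (RepresentationRel F A ι))).mapMatrix
  have map_eq_of_rel : ∀ ⦃M N⦄, RepresentationRel F A ι M N → q M = q N :=
    forall_entryRel_eq_iff.mp fun _ _ => RingQuot.mkAlgHom_rel F
  have map_scalar (c : F) : q (genericMatrix F A ι (algebraMap F A c)) = algebraMap F _ c :=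
    (map_eq_of_rel (.scalar c)).trans (q.commutes c)
  { toFun a := q (genericMatrix F A ι a)
    map_one' := by simpa only [map_one] using map_scalar 1
    map_zero' := by simpa only [map_zero] using map_scalar 0
    map_mul' a b := (map_eq_of_rel (.mul a b)).trans (map_mul q _ _)
    map_add' a b := (map_eq_of_rel (.add a b)).trans (map_add q _ _)
    commutes' := map_scalar }

variable {F A ι}

lemma universalRepresentation_apply (a : A) (i j : ι) :
    universalRepresentation F A ι a i j =
      RingQuot.mkAlgHom F (EntryRel (RepresentationRel F A ι)) (X (a, i, j)) :=
  rfl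

variable {B : Type*} [CommSemiring B] [Algebra F B]

/-- Evaluation of the generic matrices at a representation `φ`. -/
noncomputable def evalEntries (φ : A →ₐ[F] Matrix ι ι B) : MvPolynomial (A × ι × ι) F →ₐ[F] B :=
  aeval fun x => φ x.1 x.2.1 x.2.2

lemma evalEntries_X (φ : A →ₐ[F] Matrix ι ι B) (a : A) (i j : ι) :
    evalEntries φ (X (a, i, j)) = φ a i j :=
  aeval_X _ _

lemma mapMatrix_evalEntries_genericMatrix (φ : A →ₐ[F] Matrix ι ι B) (a : A) :
    (evalEntries φ).mapMatrix (genericMatrix F A ι a) = φ a :=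
  Matrix.ext (evalEntries_X φ a)

lemma mapMatrix_evalEntries_eq_of_rel (φ : A →ₐ[F] Matrix ι ι B)
    ⦃M N : Matrix ι ι (MvPolynomial (A × ι × ι) F)⦄ (h : RepresentationRel F A ι M N) :
    (evalEntries φ).mapMatrix M = (evalEntries φ).mapMatrix N := by
  cases h with
  | mul a b => simp only [map_mul, mapMatrix_evalEntries_genericMatrix]
  | add a b => simp only [map_add, mapMatrix_evalEntries_genericMatrix]
  | scalar c => simp only [mapMatrix_evalEntries_genericMatrix, AlgHom.commutes]

/-- The `B`-point of the representation scheme corresponding to a representation `φ` over `B`. -/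
noncomputable def liftRepresentation (φ : A →ₐ[F] Matrix ι ι B) :
    RepresentationRing F A ι →ₐ[F] B :=
  RingQuot.liftAlgHom F
    ⟨evalEntries φ, forall_entryRel_eq_iff.mpr (mapMatrix_evalEntries_eq_of_rel φ)⟩

lemma mapMatrix_liftRepresentation_comp_universalRepresentation (φ : A →ₐ[F] Matrix ι ι B) :
    (liftRepresentation φ).mapMatrix.comp (universalRepresentation F A ι) = φ := by
  ext a i j
  calc liftRepresentation φ (universalRepresentation F A ι a i j)
      = evalEntries φ (X (a, i, j)) := by
        rw [universalRepresentation_apply, liftRepresentation, RingQuot.liftAlgHom_mkAlgHom_apply]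
    _ = φ a i j := evalEntries_X φ a i j

lemma mapMatrix_comp_universalRepresentation_injective :
    Function.Injective fun ρ : RepresentationRing F A ι →ₐ[F] B =>
      ρ.mapMatrix.comp (universalRepresentation F A ι) := by
  intro ρ σ h
  apply RingQuot.ringQuot_ext'
  apply MvPolynomial.algHom_ext
  rintro ⟨a, i, j⟩
  exact congrFun₂ (DFunLike.congr_fun h a) i j

end RepresentationRing

theorem exists_universalRep_general (F : Type u) (A : Type v) (ι : Type w) [CommSemiring F]
    [Semiring A] [Algebra F A] [Fintype ι] [DecidableEq ι] :
    ∃ (V : Type (max u v w)) (_ : CommSemiring V) (_ : Algebra F V) (π : A →ₐ[F] Matrix ι ι V),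
      ∀ (B : Type x) [CommSemiring B] [Algebra F B],
        Function.Bijective fun ρ : V →ₐ[F] B => ρ.mapMatrix.comp π :=
  ⟨RepresentationRing F A ι, inferInstance, inferInstance, universalRepresentation F A ι,
    fun _ _ _ => ⟨mapMatrix_comp_universalRepresentation_injective, fun φ =>
      ⟨liftRepresentation φ, mapMatrix_liftRepresentation_comp_universalRepresentation φ⟩⟩⟩

/-- For every commutative `F`-algebra `A` and every `n`, there exists a commutative
`F`-algebra `V` and a representation `π : A → Mat_n(V)` which is universal among
`n`-dimensional linear representations of `A`. -/
theorem exists_universalRep (F : Type u) (A : Type u) [CommRing F] [CommRing A]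
    [Algebra F A] (n : ℕ) :
    Nonempty (UniversalRep F A n) := by
  obtain ⟨V, _, _, π, hπ⟩ := exists_universalRep_general F A (Fin n)
  exact ⟨{ V, commRing := (algebraMap F V).commSemiringToCommRing, π, universal B := hπ B }⟩

end SymmetricProduct
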